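/- Let n ≥ 1 and let K ⊂ ℝⁿ be a convex body containing the origin in its interior with G_K = G_{K°} = 0. Then the determinant of the Hessian matrix of F_K at (0,0) (a 2n×2n matrix) equals ((n+1)·vp(K))^{2n} · det( (n+2)²·cov(K°)·cov(K) − I_n ). -/

import Mathlib

open MeasureTheory RealInnerProductSpace

noncomputable section

/-- The polar body `K° = {y | ⟨x, y⟩ ≤ 1 for all x ∈ K}`. -/
def polarBody {n : ℕ} (K : Set (EuclideanSpace ℝ (Fin n))) : Set (EuclideanSpace ℝ (Fin n)) :=
  {y | ∀ x ∈ K, ⟪x, y⟫ ≤ 1}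

/-- The volume product `vp(K) = |K| · |K°|`. -/
def vp {n : ℕ} (K : Set (EuclideanSpace ℝ (Fin n))) : ℝ :=
  (volume K).toReal * (volume (polarBody K)).toReal

/-- The barycenter `G_A = |A|⁻¹ ∫_A x dx`. -/
def bary {n : ℕ} (A : Set (EuclideanSpace ℝ (Fin n))) : EuclideanSpace ℝ (Fin n) :=
  (volume A).toReal⁻¹ • ∫ x in A, x

/-- The covariance matrix `cov(K)_{ij} = |K|⁻¹ ∫_K x_i x_j dx`. -/
def covM {n : ℕ} (K : Set (EuclideanSpace ℝ (Fin n))) : Matrix (Fin n) (Fin n) ℝ :=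
  Matrix.of fun i j => (volume K).toReal⁻¹ * ∫ x in K, x i * x j

/-- The functional `F_K(x, ξ) = vp((K° + ξ)° + x)`. -/
def FK {n : ℕ} (K : Set (EuclideanSpace ℝ (Fin n)))
    (p : EuclideanSpace ℝ (Fin n) × EuclideanSpace ℝ (Fin n)) : ℝ :=
  vp ((fun y => y + p.1) '' polarBody ((fun y => y + p.2) '' polarBody K))

/-- The standard basis of `ℝⁿ × ℝⁿ` indexed by `Fin n ⊕ Fin n`. -/
def basisVec {n : ℕ} (a : Fin n ⊕ Fin n) :
    EuclideanSpace ℝ (Fin n) × EuclideanSpace ℝ (Fin n) :=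
  match a with
  | .inl i => (EuclideanSpace.single i 1, 0)
  | .inr j => (0, EuclideanSpace.single j 1)

lemma det_block {n : ℕ} (A D : Matrix (Fin n) (Fin n) ℝ) :
    (Matrix.fromBlocks A (-1) (-1) D).det = (A * D - 1).det := by
  have h1 : (Matrix.fromBlocks (0 : Matrix (Fin n) (Fin n) ℝ) (-1 : Matrix (Fin n) (Fin n) ℝ) (1 : Matrix (Fin n) (Fin n) ℝ) (0 : Matrix (Fin n) (Fin n) ℝ)).det = 1 := by
    have : Matrix.fromBlocks (0 : Matrix (Fin n) (Fin n) ℝ) (-1 : Matrix (Fin n) (Fin n) ℝ) (1 : Matrix (Fin n) (Fin n) ℝ) (0 : Matrix (Fin n) (Fin n) ℝ)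
      = Matrix.fromBlocks 1 (-1) 0 1 * (Matrix.fromBlocks 1 0 1 1 * Matrix.fromBlocks 1 (-1) 0 1) := by
      simp [Matrix.fromBlocks_multiply]
    rw [this]
    simp [Matrix.det_mul]
  have h2 : Matrix.fromBlocks A (-1) (-1) D * (Matrix.fromBlocks 1 D 0 1 * Matrix.fromBlocks 0 (-1) 1 0)
      = Matrix.fromBlocks (A * D - 1) (-A) 0 1 := by
    simp [Matrix.fromBlocks_multiply, sub_eq_add_neg]
  have h3 := congrArg Matrix.det h2
  rw [Matrix.det_mul, Matrix.det_mul, h1] at h3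
  simpa using h3

lemma polar_closed {n : ℕ} (K : Set (EuclideanSpace ℝ (Fin n))) : IsClosed (polarBody K) := by
  have : polarBody K = ⋂ x ∈ K, {y | ⟪x, y⟫ ≤ 1} := by ext; simp [polarBody]
  rw [this]
  exact isClosed_biInter fun x _ => isClosed_le (by fun_prop) (by fun_prop)

lemma polar_convex {n : ℕ} (K : Set (EuclideanSpace ℝ (Fin n))) : Convex ℝ (polarBody K) := by
  intro y hy z hz a b ha hb hab x hx
  have := hy x hx
  have := hz x hx
  rw [inner_add_right, inner_smul_right, inner_smul_right]
  nlinarith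

lemma polar_bounded {n : ℕ} {K : Set (EuclideanSpace ℝ (Fin n))} (h0 : 0 ∈ interior K) :
    Bornology.IsBounded (polarBody K) := by
  obtain ⟨r, hr, hb⟩ := Metric.isOpen_iff.1 isOpen_interior 0 h0
  refine isBounded_iff_forall_norm_le.2 ⟨2 / r, fun y hy => ?_⟩
  by_cases hy0 : y = 0
  · subst hy0; simp; positivity
  have hn : 0 < ‖y‖ := norm_pos_iff.2 hy0
  have hmem : ((r / 2) * ‖y‖⁻¹) • y ∈ K := by
    apply interior_subset; apply hb
    rw [mem_ball_zero_iff, norm_smul, Real.norm_of_nonneg (by positivity)]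
    field_simp; linarith
  have := hy _ hmem
  rw [real_inner_smul_left, real_inner_self_eq_norm_sq] at this
  have h2 : r / 2 * ‖y‖⁻¹ * ‖y‖ ^ 2 = r / 2 * ‖y‖ := by field_simp
  rw [h2] at this
  rw [le_div_iff₀ hr]; linarith

lemma polar_int {n : ℕ} {K : Set (EuclideanSpace ℝ (Fin n))} (hK : Bornology.IsBounded K) :
    0 ∈ interior (polarBody K) := by
  obtain ⟨R, hR, hb⟩ := hK.exists_pos_norm_le
  rw [mem_interior]
  refine ⟨Metric.ball 0 (1 / R), fun y hy x hx => ?_, Metric.isOpen_ball, by simpa using hR⟩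
  rw [mem_ball_zero_iff, lt_div_iff₀ hR] at hy
  have := hb x hx
  have := real_inner_le_norm x y
  nlinarith [norm_nonneg x, norm_nonneg y]

lemma bipolar {n : ℕ} {K : Set (EuclideanSpace ℝ (Fin n))} (hc : IsClosed K) (hv : Convex ℝ K)
    (h0 : 0 ∈ K) : polarBody (polarBody K) = K := by
  apply Set.Subset.antisymm
  · intro z hz
    by_contra hzK
    obtain ⟨f, u, hf, hu⟩ := geometric_hahn_banach_closed_point hv hc hzK
    have hu0 : 0 < u := by simpa using hf 0 h0
    set y := (InnerProductSpace.toDual ℝ _).symm f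
    have hy : ∀ x, ⟪y, x⟫ = f x := fun x => by simp [y]
    have := hz (u⁻¹ • y) (fun x hx => by
      rw [real_inner_smul_right, real_inner_comm, hy, inv_mul_le_iff₀ hu0]
      linarith [hf x hx])
    rw [real_inner_smul_left, hy, inv_mul_le_iff₀ hu0] at this
    linarith
  · intro x hx y hy
    rw [real_inner_comm]; exact hy x hx

lemma polar_compact {n : ℕ} {K : Set (EuclideanSpace ℝ (Fin n))} (h0 : 0 ∈ interior K) :
    IsCompact (polarBody K) := Metric.isCompact_of_isClosed_isBounded (polar_closed K) (polar_bounded h0)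
def Jint {n : ℕ} {V W : Type*} [NormedAddCommGroup V] [NormedSpace ℝ V] [NormedAddCommGroup W]
    [NormedSpace ℝ W] (A : Set (EuclideanSpace ℝ (Fin n))) (l : EuclideanSpace ℝ (Fin n) → V →L[ℝ] ℝ)
    (p : ℕ) (w : EuclideanSpace ℝ (Fin n) → W) (z : V) : W :=
  ∫ v in A, ((1 + l v z) ^ p)⁻¹ • w v

lemma Jint_deriv {n : ℕ} {V W : Type*} [NormedAddCommGroup V] [NormedSpace ℝ V]
    [NormedAddCommGroup W] [NormedSpace ℝ W] {A : Set (EuclideanSpace ℝ (Fin n))}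
    (hA : IsCompact A) {l : EuclideanSpace ℝ (Fin n) → V →L[ℝ] ℝ} (hl : Continuous l)
    (p : ℕ) {w : EuclideanSpace ℝ (Fin n) → W} (hw : Continuous w) {R : ℝ}
    (hR : ∀ v ∈ A, ‖l v‖ ≤ R) {z : V} (hz : R * ‖z‖ < 1 / 2) :
    HasFDerivAt (Jint A l p w) (Jint A l (p + 1) (fun v => (-(p : ℝ)) • (l v).smulRight (w v)) z) z := by
  have hlow : ∀ z : V, R * ‖z‖ < 1 / 2 → ∀ v ∈ A, 1 / 2 ≤ 1 + l v z := by
    intro z hz v hv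
    have h1 := (l v).le_opNorm z
    have h2 := mul_le_mul_of_nonneg_right (hR v hv) (norm_nonneg z)
    have h3 := neg_abs_le (l v z)
    rw [Real.norm_eq_abs] at h1
    linarith
  have hcont : ∀ {W' : Type _} [NormedAddCommGroup W'] [NormedSpace ℝ W'] (q : ℕ)
      (w' : EuclideanSpace ℝ (Fin n) → W') (_ : Continuous w') (z : V) (_ : R * ‖z‖ < 1 / 2),
      IntegrableOn (fun v => ((1 + l v z) ^ q)⁻¹ • w' v) A := by
    intro W' _ _ q w' hw' z hz
    apply ContinuousOn.integrableOn_compact hA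
    have hc : ContinuousOn (fun v => (1 + l v z) ^ q) A := by fun_prop
    refine ContinuousOn.smul (hc.inv₀ ?_) hw'.continuousOn
    intro v hv
    have := hlow z hz v hv
    positivity
  have hcont' : ∀ (q : ℕ)
      (w' : EuclideanSpace ℝ (Fin n) → V →L[ℝ] W) (_ : Continuous w') (z : V) (_ : R * ‖z‖ < 1 / 2),
      IntegrableOn (fun v => ((1 + l v z) ^ q)⁻¹ • w' v) A := by
    intro q w' hw' z hz
    apply ContinuousOn.integrableOn_compact hA
    have hc : ContinuousOn (fun v => (1 + l v z) ^ q) A := by fun_prop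
    refine ContinuousOn.smul (hc.inv₀ ?_) hw'.continuousOn
    intro v hv
    have := hlow z hz v hv
    positivity
  have hsr : Continuous fun v => (-(p : ℝ)) • (l v).smulRight (w v) := by fun_prop
  have hopen : IsOpen {z : V | R * ‖z‖ < 1 / 2} := isOpen_lt (by fun_prop) (by fun_prop)
  refine hasFDerivAt_integral_of_dominated_of_fderiv_le
    (bound := fun v => 2 ^ (p + 1) * ‖(-(p : ℝ)) • (l v).smulRight (w v)‖)
    (F' := fun z v => ((1 + l v z) ^ (p + 1))⁻¹ • ((-(p : ℝ)) • (l v).smulRight (w v)))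
    (hopen.mem_nhds hz) ?_ (hcont p w hw z hz) (hcont' _ _ hsr z hz).aestronglyMeasurable ?_ ?_ ?_
  · filter_upwards [hopen.mem_nhds hz] with z' hz'
    exact (hcont p w hw z' hz').aestronglyMeasurable
  · refine (ae_restrict_iff' hA.measurableSet).2 (Filter.Eventually.of_forall fun v hv z' hz' => ?_)
    have := hlow z' hz' v hv
    rw [norm_smul]
    gcongr
    rw [norm_inv, norm_pow, ← inv_pow]
    gcongr
    rw [Real.norm_of_nonneg (by linarith)]
    rw [inv_le_comm₀ (by linarith) (by norm_num)]
    linarith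
  · exact ContinuousOn.integrableOn_compact hA
      (continuous_const.mul hsr.norm).continuousOn
  · refine (ae_restrict_iff' hA.measurableSet).2 (Filter.Eventually.of_forall fun v hv z' hz' => ?_)
    have hlo := hlow z' hz' v hv
    have hne : 1 + l v z' ≠ 0 := by linarith
    have h1 : HasDerivAt (fun t : ℝ => ((1 + t) ^ p)⁻¹) (-(p : ℝ) * ((1 + l v z') ^ (p + 1))⁻¹) (l v z') := by
      have h := (((hasDerivAt_id' (l v z')).const_add 1).fun_pow p).fun_inv (pow_ne_zero p hne)
      refine h.congr_deriv ?_
      rcases p with _ | k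
      · simp
      · simp only [Nat.add_sub_cancel]; field_simp; ring
    have h2 := (h1.comp_hasFDerivAt z' (l v).hasFDerivAt).smul_const (w v)
    refine HasFDerivAt.congr_fderiv h2 ?_
    refine ContinuousLinearMap.ext fun y => ?_
    simp [smul_smul]
    ring_nf

lemma image_polar {n : ℕ} {A : Set (EuclideanSpace ℝ (Fin n))} (h0 : 0 ∈ interior A)
    (ξ : EuclideanSpace ℝ (Fin n)) (hpos : ∀ y ∈ polarBody A, 0 < 1 + ⟪ξ, y⟫) :
    polarBody ((fun y => y + ξ) '' A) = (fun y => (1 + ⟪ξ, y⟫)⁻¹ • y) '' polarBody A := by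
  apply Set.Subset.antisymm
  · intro z hz
    have h1 : ∀ a ∈ A, ⟪a, z⟫ ≤ 1 - ⟪ξ, z⟫ := by
      intro a ha
      have := hz _ ⟨a, ha, rfl⟩
      simp only [inner_add_left] at this
      linarith
    have h2 : 0 < 1 - ⟪ξ, z⟫ := by
      have h3 := h1 0 (interior_subset h0)
      rw [inner_zero_left] at h3
      rcases h3.lt_or_eq with h | h
      · exact h
      exfalso
      rw [← h] at h1
      have hc : Filter.Tendsto (fun t : ℝ => t • z) (nhdsWithin 0 (Set.Ioi 0)) (nhds 0) := by
        have : Continuous (fun t : ℝ => t • z) := by fun_prop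
        simpa using (this.tendsto 0).mono_left nhdsWithin_le_nhds
      obtain ⟨t, ht, ht0⟩ := ((hc.eventually (mem_interior_iff_mem_nhds.1 h0)).and self_mem_nhdsWithin).exists
      have h4 := h1 _ ht
      rw [real_inner_smul_left] at h4
      have h5 : ⟪z, z⟫ ≤ 0 := nonpos_of_mul_nonpos_right h4 ht0
      rw [real_inner_self_nonpos] at h5
      subst h5
      simp at h
    refine ⟨(1 - ⟪ξ, z⟫)⁻¹ • z, ?_, ?_⟩
    · intro a ha
      rw [real_inner_smul_right, inv_mul_le_iff₀ h2]
      linarith [h1 a ha]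
    · simp only [real_inner_smul_right, smul_smul]
      have : (1 + (1 - ⟪ξ, z⟫)⁻¹ * ⟪ξ, z⟫)⁻¹ * (1 - ⟪ξ, z⟫)⁻¹ = 1 := by
        have h6 : 1 + (1 - ⟪ξ, z⟫)⁻¹ * ⟪ξ, z⟫ = (1 - ⟪ξ, z⟫)⁻¹ := by field_simp; ring
        rw [h6]; field_simp
      rw [this, one_smul]
  · rintro _ ⟨y, hy, rfl⟩ _ ⟨a, ha, rfl⟩
    have h1 := hpos y hy
    have h2 := hy a ha
    simp only [real_inner_smul_right, inner_add_left]
    rw [← mul_add, inv_mul_le_iff₀ h1]; linarith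

lemma vol_polar {n : ℕ} {A : Set (EuclideanSpace ℝ (Fin n))} (h0 : 0 ∈ interior A)
    (ξ : EuclideanSpace ℝ (Fin n)) (hpos : ∀ y ∈ polarBody A, 0 < 1 + ⟪ξ, y⟫) :
    (volume (polarBody ((fun y => y + ξ) '' A))).toReal =
      ∫ y in polarBody A, ((1 + ⟪ξ, y⟫) ^ (n + 1))⁻¹ := by
  rw [image_polar h0 ξ hpos]
  have hm : MeasurableSet (polarBody A) := (polar_closed A).measurableSet
  have hd : ∀ y ∈ polarBody A, HasFDerivWithinAt (fun y => (1 + ⟪ξ, y⟫)⁻¹ • y)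
      ((1 + ⟪ξ, y⟫)⁻¹ • (ContinuousLinearMap.id ℝ (EuclideanSpace ℝ (Fin n)) +
        (innerSL ℝ ξ).smulRight (-(1 + ⟪ξ, y⟫)⁻¹ • y))) (polarBody A) y := by
    intro y hy
    have hne : 1 + ⟪ξ, y⟫ ≠ 0 := (hpos y hy).ne'
    have h1 : HasFDerivAt (fun y => 1 + ⟪ξ, y⟫) (innerSL ℝ ξ) y :=
      ((innerSL ℝ ξ).hasFDerivAt (x := y)).const_add 1
    have h2 := ((hasDerivAt_inv hne).comp_hasFDerivAt y h1).smul (hasFDerivAt_id y)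
    refine HasFDerivAt.hasFDerivWithinAt ?_
    refine HasFDerivAt.congr_fderiv h2 ?_
    refine ContinuousLinearMap.ext fun h => ?_
    simp [smul_smul]
    ring_nf
    congr 1
    rw [inv_pow, mul_comm]
    congr 2
    ring
  have hi : Set.InjOn (fun y => (1 + ⟪ξ, y⟫)⁻¹ • y) (polarBody A) := by
    intro y hy z hz h
    have h1 := hpos y hy
    have h2 := hpos z hz
    have h3 := congrArg (fun u => ⟪ξ, u⟫) h
    simp only [real_inner_smul_right] at h3 h
    have h4 : ⟪ξ, y⟫ = ⟪ξ, z⟫ := by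
      field_simp at h3; linarith
    rw [h4] at h
    exact smul_right_injective _ (inv_ne_zero h2.ne') h
  have h := integral_image_eq_integral_abs_det_fderiv_smul volume hm hd hi (fun _ => (1 : ℝ))
  rw [setIntegral_const] at h
  simp only [smul_eq_mul, mul_one] at h
  rw [Measure.real] at h
  rw [h]
  refine setIntegral_congr_fun hm fun y hy => ?_
  have h1 := hpos y hy
  have hdet : (ContinuousLinearMap.id ℝ (EuclideanSpace ℝ (Fin n)) +
        (innerSL ℝ ξ).smulRight (-(1 + ⟪ξ, y⟫)⁻¹ • y)).det = (1 + ⟪ξ, y⟫)⁻¹ := by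
    have := LinearMap.transvection.det ((innerSL ℝ ξ : EuclideanSpace ℝ (Fin n) →L[ℝ] ℝ) : EuclideanSpace ℝ (Fin n) →ₗ[ℝ] ℝ) (-(1 + ⟪ξ, y⟫)⁻¹ • y)
    refine Eq.trans (Eq.trans ?_ this) ?_
    · rfl
    · simp [real_inner_smul_right]; field_simp; ring
  have : ((1 + ⟪ξ, y⟫)⁻¹ • (ContinuousLinearMap.id ℝ (EuclideanSpace ℝ (Fin n)) +
        (innerSL ℝ ξ).smulRight (-(1 + ⟪ξ, y⟫)⁻¹ • y))).det = ((1 + ⟪ξ, y⟫) ^ (n + 1))⁻¹ := by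
    rw [ContinuousLinearMap.det] at hdet ⊢
    rw [ContinuousLinearMap.toLinearMap_smul, LinearMap.det_smul, hdet]
    simp [pow_succ]
    ring
  simp only [this]
  rw [abs_of_pos (by positivity)]
def ip (n : ℕ) : EuclideanSpace ℝ (Fin n) →L[ℝ] EuclideanSpace ℝ (Fin n) →L[ℝ] ℝ :=
  (isBoundedBilinearMap_inner (𝕜 := ℝ) (E := EuclideanSpace ℝ (Fin n))).toContinuousLinearMap

@[simp] lemma ip_apply {n : ℕ} (x y : EuclideanSpace ℝ (Fin n)) : ip n x y = ⟪x, y⟫ := rfl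

def lP (n : ℕ) (v : EuclideanSpace ℝ (Fin n)) : (EuclideanSpace ℝ (Fin n) × ℝ) →L[ℝ] ℝ :=
  (ip n v).comp (ContinuousLinearMap.fst ℝ _ _) + ContinuousLinearMap.snd ℝ _ _

@[simp] lemma lP_apply {n : ℕ} (v : EuclideanSpace ℝ (Fin n)) (x : EuclideanSpace ℝ (Fin n) × ℝ) :
    lP n v x = ⟪v, x.1⟫ + x.2 := rfl

lemma lP_cont (n : ℕ) : Continuous (lP n) := by
  unfold lP; fun_prop

def mm (n : ℕ) (z : EuclideanSpace ℝ (Fin n) × EuclideanSpace ℝ (Fin n)) :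
    EuclideanSpace ℝ (Fin n) × ℝ := (z.1, ⟪z.1, z.2⟫)

def mm' (n : ℕ) (z : EuclideanSpace ℝ (Fin n) × EuclideanSpace ℝ (Fin n)) :
    (EuclideanSpace ℝ (Fin n) × EuclideanSpace ℝ (Fin n)) →L[ℝ] (EuclideanSpace ℝ (Fin n) × ℝ) :=
  (ContinuousLinearMap.inl ℝ _ _).comp (ContinuousLinearMap.fst ℝ _ _) +
  (ContinuousLinearMap.inr ℝ _ _).comp ((ip n z.1).comp (ContinuousLinearMap.snd ℝ _ _) +
    (ip n z.2).comp (ContinuousLinearMap.fst ℝ _ _))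

lemma mm_deriv (n : ℕ) (z) : HasFDerivAt (mm n) (mm' n z) z := by
  have h1 := ((ip n).hasFDerivAt (x := z.1)).comp z (hasFDerivAt_fst (𝕜 := ℝ) (p := z))
  have h2 := h1.clm_apply (hasFDerivAt_snd (𝕜 := ℝ) (p := z))
  have h3 := (hasFDerivAt_fst (𝕜 := ℝ) (p := z)).prodMk h2
  refine HasFDerivAt.congr_fderiv h3 ?_
  refine ContinuousLinearMap.ext fun h => ?_
  refine Prod.ext ?_ ?_
  · simp [mm']
  · simp [mm', real_inner_comm]

lemma mm'_diff (n : ℕ) : Differentiable ℝ (mm' n) := by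
  unfold mm'
  fun_prop

lemma mm'_deriv_apply (n : ℕ) (z k h) : fderiv ℝ (mm' n) z k h = (0, ⟪k.1, h.2⟫ + ⟪k.2, h.1⟫) := by
  have h1 : fderiv ℝ (mm' n) z k h = fderiv ℝ (fun z => mm' n z h) z k := by
    have := ((mm'_diff n z).hasFDerivAt.clm_apply (hasFDerivAt_const h z)).fderiv
    rw [this]; simp
  rw [h1]
  let T : (EuclideanSpace ℝ (Fin n) × EuclideanSpace ℝ (Fin n)) →L[ℝ] (EuclideanSpace ℝ (Fin n) × ℝ) :=
    (ContinuousLinearMap.inr ℝ _ _).comp (((ip n).flip h.2).comp (ContinuousLinearMap.fst ℝ _ _) +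
      ((ip n).flip h.1).comp (ContinuousLinearMap.snd ℝ _ _))
  have h2 : (fun z => mm' n z h) = fun z => T z + (h.1, 0) := by
    funext z
    refine Prod.ext ?_ ?_ <;> simp [mm', T]
  rw [h2, fderiv_add_const, T.fderiv]
  simp [T]

lemma Jint_zero {n : ℕ} {V W : Type*} [NormedAddCommGroup V] [NormedSpace ℝ V]
    [NormedAddCommGroup W] [NormedSpace ℝ W] (A : Set (EuclideanSpace ℝ (Fin n)))
    (l : EuclideanSpace ℝ (Fin n) → V →L[ℝ] ℝ)
    (p : ℕ) (w : EuclideanSpace ℝ (Fin n) → W) : Jint A l p w 0 = ∫ v in A, w v := by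
  simp [Jint]

def w1 {n : ℕ} {V : Type*} [NormedAddCommGroup V] [NormedSpace ℝ V]
    (l : EuclideanSpace ℝ (Fin n) → V →L[ℝ] ℝ) (p : ℕ) (v : EuclideanSpace ℝ (Fin n)) : V →L[ℝ] ℝ :=
  (-(p : ℝ)) • (l v).smulRight (1 : ℝ)

def w2 {n : ℕ} {V : Type*} [NormedAddCommGroup V] [NormedSpace ℝ V]
    (l : EuclideanSpace ℝ (Fin n) → V →L[ℝ] ℝ) (p : ℕ) (v : EuclideanSpace ℝ (Fin n)) :
    V →L[ℝ] V →L[ℝ] ℝ :=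
  (-((p + 1 : ℕ) : ℝ)) • (l v).smulRight (w1 l p v)

lemma w1_cont {n : ℕ} {V : Type*} [NormedAddCommGroup V] [NormedSpace ℝ V]
    {l : EuclideanSpace ℝ (Fin n) → V →L[ℝ] ℝ} (hl : Continuous l) (p : ℕ) : Continuous (w1 l p) := by
  unfold w1; fun_prop

lemma sr_cont {n : ℕ} {V W : Type*} [NormedAddCommGroup V] [NormedSpace ℝ V]
    [NormedAddCommGroup W] [NormedSpace ℝ W] (c : ℝ)
    {l : EuclideanSpace ℝ (Fin n) → V →L[ℝ] ℝ} (hl : Continuous l)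
    {w : EuclideanSpace ℝ (Fin n) → W} (hw : Continuous w) :
    Continuous fun v => c • (l v).smulRight (w v) := by fun_prop

lemma w2_cont {n : ℕ} {V : Type*} [NormedAddCommGroup V] [NormedSpace ℝ V]
    {l : EuclideanSpace ℝ (Fin n) → V →L[ℝ] ℝ} (hl : Continuous l) (p : ℕ) : Continuous (w2 l p) := by
  exact sr_cont _ hl (w1_cont hl p)

lemma D1 {n : ℕ} {V : Type*} [NormedAddCommGroup V] [NormedSpace ℝ V]
    {A : Set (EuclideanSpace ℝ (Fin n))} (hA : IsCompact A)
    {l : EuclideanSpace ℝ (Fin n) → V →L[ℝ] ℝ} (hl : Continuous l) (p q : ℕ) (h : V) :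
    Jint A l q (w1 l p) 0 h = -(p : ℝ) * ∫ v in A, l v h := by
  rw [Jint_zero, ContinuousLinearMap.integral_apply
    ((w1_cont hl p).continuousOn.integrableOn_compact hA), ← integral_const_mul]
  simp [w1]

set_option maxSynthPendingDepth 3 in
lemma D2 {n : ℕ} {V : Type*} [NormedAddCommGroup V] [NormedSpace ℝ V]
    {A : Set (EuclideanSpace ℝ (Fin n))} (hA : IsCompact A)
    {l : EuclideanSpace ℝ (Fin n) → V →L[ℝ] ℝ} (hl : Continuous l) (p q : ℕ) (k h : V) :
    Jint A l q (w2 l p) 0 k h = (p : ℝ) * (p + 1) * ∫ v in A, l v k * l v h := by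
  have I2 : Integrable (w2 l p) (volume.restrict A) :=
    (w2_cont hl p).continuousOn.integrableOn_compact hA
  rw [Jint_zero, ContinuousLinearMap.integral_apply I2, ContinuousLinearMap.integral_apply,
    ← integral_const_mul]
  · congr 1
    funext v
    simp [w2, w1]
    ring
  · exact ContinuousOn.integrableOn_compact hA (((w2_cont hl p).clm_apply continuous_const).continuousOn)

def GG {n : ℕ} (K P : Set (EuclideanSpace ℝ (Fin n)))
    (z : EuclideanSpace ℝ (Fin n) × EuclideanSpace ℝ (Fin n)) : ℝ :=
  Jint K (ip n) (n + 1) (fun _ => (1 : ℝ)) z.2 * Jint P (lP n) (n + 1) (fun _ => (1 : ℝ)) (mm n z)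

lemma GG_hess {n : ℕ} {K P : Set (EuclideanSpace ℝ (Fin n))} (hK : IsCompact K) (hP : IsCompact P)
    (k h : EuclideanSpace ℝ (Fin n) × EuclideanSpace ℝ (Fin n))
    (hK0 : ∀ x, ∫ v in K, ⟪v, x⟫ = 0) (hP0 : ∀ x, ∫ v in P, ⟪v, x⟫ = 0) :
    fderiv ℝ (fderiv ℝ (GG K P)) (0, 0) k h =
      (volume K).toReal * (((n : ℝ) + 1) * (n + 2) * ∫ v in P, ⟪v, k.1⟫ * ⟪v, h.1⟫)
      - ((n : ℝ) + 1) * (volume K).toReal * (volume P).toReal * (⟪k.1, h.2⟫ + ⟪k.2, h.1⟫)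
      + (volume P).toReal * (((n : ℝ) + 1) * (n + 2) * ∫ v in K, ⟪v, k.2⟫ * ⟪v, h.2⟫) := by
  obtain ⟨RK, hRK⟩ := hK.exists_bound_of_continuousOn (ip n).continuous.continuousOn
  obtain ⟨RP, hRP⟩ := hP.exists_bound_of_continuousOn (lP_cont n).continuousOn
  set G' := fun z : EuclideanSpace ℝ (Fin n) × EuclideanSpace ℝ (Fin n) =>
    Jint K (ip n) (n + 1) (fun _ => (1 : ℝ)) z.2 •
      (Jint P (lP n) (n + 2) (w1 (lP n) (n + 1)) (mm n z)).comp (mm' n z) +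
    Jint P (lP n) (n + 1) (fun _ => (1 : ℝ)) (mm n z) •
      (Jint K (ip n) (n + 2) (w1 (ip n) (n + 1)) z.2).comp (ContinuousLinearMap.snd ℝ _ _) with hG'
  have hmc : Continuous (mm n) := by unfold mm; fun_prop
  have hm0 : mm n (0, 0) = 0 := by simp [mm]
  have hm'0 : mm' n (0, 0) = (ContinuousLinearMap.inl ℝ _ _).comp (ContinuousLinearMap.fst ℝ _ _) := by
    simp [mm']
  have e1 : ∀ᶠ z : EuclideanSpace ℝ (Fin n) × EuclideanSpace ℝ (Fin n) in nhds (0, 0),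
      RK * ‖z.2‖ < 1 / 2 :=
    (isOpen_lt (by fun_prop) (by fun_prop)).mem_nhds (by simp)
  have e2 : ∀ᶠ z : EuclideanSpace ℝ (Fin n) × EuclideanSpace ℝ (Fin n) in nhds (0, 0),
      RP * ‖mm n z‖ < 1 / 2 :=
    (isOpen_lt (by fun_prop) (by fun_prop)).mem_nhds (by simp [hm0])
  have hd : ∀ᶠ z in nhds (0, 0), fderiv ℝ (GG K P) z = G' z := by
    filter_upwards [e1, e2] with z h1 h2
    have a1 := (Jint_deriv hK (ip n).continuous (n + 1) (w := fun _ => (1 : ℝ)) continuous_const hRK h1).comp z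
      (hasFDerivAt_snd (𝕜 := ℝ) (p := z))
    have a2 := (Jint_deriv hP (lP_cont n) (n + 1) (w := fun _ => (1 : ℝ)) continuous_const hRP h2).comp z
      (mm_deriv n z)
    exact (a1.mul a2).fderiv
  rw [Filter.EventuallyEq.fderiv_eq hd]
  have z2 : RK * ‖(0 : EuclideanSpace ℝ (Fin n))‖ < 1 / 2 := by simp
  have z1 : RP * ‖mm n (0, 0)‖ < 1 / 2 := by simp [hm0]
  have b1 := (Jint_deriv hK (ip n).continuous (n + 1) (w := fun _ => (1 : ℝ)) continuous_const hRK z2).comp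
    ((0, 0) : EuclideanSpace ℝ (Fin n) × EuclideanSpace ℝ (Fin n)) (hasFDerivAt_snd (𝕜 := ℝ))
  have b2 := (Jint_deriv hP (lP_cont n) (n + 1) (w := fun _ => (1 : ℝ)) continuous_const hRP z1).comp (0, 0)
    (mm_deriv n (0, 0))
  have b3 := (Jint_deriv hK (ip n).continuous (n + 2) (w1_cont (ip n).continuous (n + 1)) hRK z2).comp
    ((0, 0) : EuclideanSpace ℝ (Fin n) × EuclideanSpace ℝ (Fin n)) (hasFDerivAt_snd (𝕜 := ℝ))
  have b4 := (Jint_deriv hP (lP_cont n) (n + 2) (w1_cont (lP_cont n) (n + 1)) hRP z1).comp (0, 0)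
    (mm_deriv n (0, 0))
  have b5 := (mm'_diff n (0, 0)).hasFDerivAt
  have H := (b1.smul (b4.clm_comp b5)).add (b2.smul (b3.clm_comp (hasFDerivAt_const
    (ContinuousLinearMap.snd ℝ (EuclideanSpace ℝ (Fin n)) (EuclideanSpace ℝ (Fin n))) _)))
  have H' := HasFDerivAt.fderiv (f := G') H
  rw [H']
  have f1 : ∀ x, Jint K (ip n) (n + 1 + 1) (fun v => (-((n + 1 : ℕ) : ℝ)) • (ip n v).smulRight (1 : ℝ)) 0 x
      = 0 := fun x => by
    have := D1 hK (ip n).continuous (n + 1) (n + 2) x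
    simp only [ip_apply, hK0, mul_zero] at this
    exact this
  have f1' : ∀ x, Jint K (ip n) (n + 2) (w1 (ip n) (n + 1)) 0 x = 0 := f1
  have f2 : ∀ x : EuclideanSpace ℝ (Fin n) × ℝ,
      Jint P (lP n) (n + 2) (w1 (lP n) (n + 1)) 0 x = -((n : ℝ) + 1) * (volume P).toReal * x.2 := fun x => by
    have := D1 hP (lP_cont n) (n + 1) (n + 2) x
    rw [this]
    simp only [lP_apply]
    rw [integral_add, hP0]
    · simp [Measure.real]; ring
    · exact ContinuousOn.integrableOn_compact hP (by fun_prop)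
    · exact ContinuousOn.integrableOn_compact hP (by fun_prop)
  have f2' : ∀ x : EuclideanSpace ℝ (Fin n) × ℝ,
      Jint P (lP n) (n + 1 + 1) (fun v => (-((n + 1 : ℕ) : ℝ)) • (lP n v).smulRight (1 : ℝ)) 0 x
      = -((n : ℝ) + 1) * (volume P).toReal * x.2 := f2
  have f3 : ∀ x y, Jint K (ip n) (n + 2 + 1) (fun v => (-((n + 2 : ℕ) : ℝ)) • (ip n v).smulRight (w1 (ip n) (n + 1) v)) 0 x y
      = ((n : ℝ) + 1) * (n + 2) * ∫ v in K, ⟪v, x⟫ * ⟪v, y⟫ := fun x y => by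
    have := D2 hK (ip n).continuous (n + 1) (n + 2 + 1) x y
    refine Eq.trans this ?_
    simp only [ip_apply]; push_cast; ring
  have f4 : ∀ x y, Jint P (lP n) (n + 2 + 1) (fun v => (-((n + 2 : ℕ) : ℝ)) • (lP n v).smulRight (w1 (lP n) (n + 1) v)) 0 x y
      = ((n : ℝ) + 1) * (n + 2) * ∫ v in P, (⟪v, x.1⟫ + x.2) * (⟪v, y.1⟫ + y.2) := fun x y => by
    have := D2 hP (lP_cont n) (n + 1) (n + 2 + 1) x y
    refine Eq.trans this ?_
    simp only [lP_apply]; push_cast; ring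
  have g1 : Jint K (ip n) (n + 1) (fun _ => (1 : ℝ)) 0 = (volume K).toReal := by
    rw [Jint_zero]; simp [Measure.real]
  have g2 : Jint P (lP n) (n + 1) (fun _ => (1 : ℝ)) 0 = (volume P).toReal := by
    rw [Jint_zero]; simp [Measure.real]
  simp only [hm0, hm'0, Function.comp_apply, add_apply, smul_apply,
    ContinuousLinearMap.smulRight_apply, ContinuousLinearMap.comp_apply, ContinuousLinearMap.compL_apply,
    ContinuousLinearMap.flip_apply, g1, g2, f1, f1', f2, f2', f3, f4, ContinuousLinearMap.coe_snd',
    ContinuousLinearMap.coe_fst', ContinuousLinearMap.inl_apply, mm'_deriv_apply, smul_eq_mul]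
  simp
  ring

lemma FK_eq {n : ℕ} {K : Set (EuclideanSpace ℝ (Fin n))}
    (hKcomp : IsCompact K) (hKconv : Convex ℝ K) (hK0 : 0 ∈ interior K) :
    FK K =ᶠ[nhds (0, 0)] GG K (polarBody K) := by
  have hP := polar_compact hK0
  have hbi := bipolar hKcomp.isClosed hKconv (interior_subset hK0)
  have hPint := polar_int hKcomp.isBounded
  have hPconv := polar_convex K
  set P := polarBody K with hPdef
  obtain ⟨RK, hRK⟩ := hKcomp.exists_bound_of_continuousOn (ip n).continuous.continuousOn
  obtain ⟨RP, hRP⟩ := hP.exists_bound_of_continuousOn (lP_cont n).continuousOn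
  have hmc : Continuous (mm n) := by unfold mm; fun_prop
  have hm0 : mm n (0, 0) = 0 := by simp [mm]
  have e1 : ∀ᶠ z : EuclideanSpace ℝ (Fin n) × EuclideanSpace ℝ (Fin n) in nhds (0, 0),
      RK * ‖z.2‖ < 1 / 2 :=
    (isOpen_lt (by fun_prop) (by fun_prop)).mem_nhds (by simp)
  have e2 : ∀ᶠ z : EuclideanSpace ℝ (Fin n) × EuclideanSpace ℝ (Fin n) in nhds (0, 0),
      RP * ‖mm n z‖ < 1 / 2 :=
    (isOpen_lt (by fun_prop) (by fun_prop)).mem_nhds (by simp [hm0])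
  have e3 : ∀ᶠ z : EuclideanSpace ℝ (Fin n) × EuclideanSpace ℝ (Fin n) in nhds (0, 0),
      -z.2 ∈ interior P := by
    have hc : Continuous fun z : EuclideanSpace ℝ (Fin n) × EuclideanSpace ℝ (Fin n) => -z.2 := by
      fun_prop
    exact (isOpen_interior.preimage hc).mem_nhds (by simpa using hPint)
  filter_upwards [e1, e2, e3] with z h1 h2 h3
  have hp1 : ∀ y ∈ K, 0 < 1 + ⟪z.2, y⟫ := fun y hy => by
    have a := (ip n y).le_opNorm z.2
    have b := mul_le_mul_of_nonneg_right (hRK y hy) (norm_nonneg z.2)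
    rw [ip_apply, Real.norm_eq_abs, real_inner_comm] at a
    linarith [neg_abs_le ⟪z.2, y⟫]
  have hp2 : ∀ y ∈ P, 0 < 1 + (⟪y, z.1⟫ + ⟪z.1, z.2⟫) := fun y hy => by
    have a := (lP n y).le_opNorm (mm n z)
    have b := mul_le_mul_of_nonneg_right (hRP y hy) (norm_nonneg (mm n z))
    rw [lP_apply, Real.norm_eq_abs] at a
    have c := neg_abs_le (⟪y, (mm n z).1⟫ + (mm n z).2)
    have d : ⟪y, (mm n z).1⟫ + (mm n z).2 = ⟪y, z.1⟫ + ⟪z.1, z.2⟫ := rfl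
    rw [← d]
    linarith
  have hQcomp : IsCompact ((fun y => y + z.2) '' P) := hP.image (by fun_prop)
  have hQconv : Convex ℝ ((fun y => y + z.2) '' P) := by
    have := hPconv.translate z.2
    simpa [add_comm] using this
  have hQ0 : (0 : EuclideanSpace ℝ (Fin n)) ∈ (fun y => y + z.2) '' P :=
    ⟨-z.2, interior_subset h3, by simp⟩
  have hbiQ := bipolar hQcomp.isClosed hQconv hQ0
  have hLint := polar_int hQcomp.isBounded
  have v1 := vol_polar hPint z.2 (by rw [hbi]; exact hp1)
  have v2 := vol_polar hLint z.1 (by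
    rw [hbiQ]
    rintro _ ⟨y, hy, rfl⟩
    have := hp2 y hy
    simp only [inner_add_right]
    rwa [real_inner_comm] at this)
  rw [hbi] at v1
  rw [hbiQ, (measurePreserving_add_right volume z.2).setIntegral_image_emb
    (measurableEmbedding_addRight z.2)] at v2
  unfold FK vp GG
  rw [v2, Set.image_add_right, measure_preimage_add_right, v1]
  congr 1
  · simp [Jint, real_inner_comm]
  · simp [Jint, mm, real_inner_comm, inner_add_right]

theorem stmt9 {n : ℕ} (hn : 1 ≤ n) (K : Set (EuclideanSpace ℝ (Fin n)))
    (hKcomp : IsCompact K) (hKconv : Convex ℝ K)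
    (hK0 : (0 : EuclideanSpace ℝ (Fin n)) ∈ interior K)
    (hbK : bary K = 0) (hbKpolar : bary (polarBody K) = 0) :
    (Matrix.of fun a b : Fin n ⊕ Fin n =>
        fderiv ℝ (fderiv ℝ (FK K)) (0, 0) (basisVec a) (basisVec b)).det
      = (((n : ℝ) + 1) * vp K) ^ (2 * n) *
        (((n : ℝ) + 2) ^ 2 • (covM (polarBody K) * covM K) - 1).det := by
  have hP := polar_compact hK0
  have hPint := polar_int hKcomp.isBounded
  have hvol : ∀ A : Set (EuclideanSpace ℝ (Fin n)), IsCompact A → 0 ∈ interior A →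
      (volume A).toReal ≠ 0 := fun A hA h0 =>
    (ENNReal.toReal_pos (Measure.measure_pos_of_nonempty_interior volume ⟨0, h0⟩).ne' hA.measure_lt_top.ne).ne'
  have hz : ∀ A : Set (EuclideanSpace ℝ (Fin n)), IsCompact A → 0 ∈ interior A → bary A = 0 →
      ∀ x, ∫ v in A, ⟪v, x⟫ = 0 := by
    intro A hA h0 hb x
    have hI : ∫ v in A, v = 0 :=
      (smul_eq_zero.1 hb).resolve_left (inv_ne_zero (hvol A hA h0))
    have hint : Integrable (fun v : EuclideanSpace ℝ (Fin n) => v) (volume.restrict A) :=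
      continuous_id.continuousOn.integrableOn_compact hA
    have := ((ip n).flip x).integral_comp_comm hint
    rw [hI] at this
    simpa using this
  have hH := fun k h => GG_hess hKcomp hP k h (hz K hKcomp hK0 hbK) (hz _ hP hPint hbKpolar)
  have hF : fderiv ℝ (fderiv ℝ (FK K)) (0, 0) = fderiv ℝ (fderiv ℝ (GG K (polarBody K))) (0, 0) :=
    (FK_eq hKcomp hKconv hK0).fderiv.fderiv_eq
  have vK := hvol K hKcomp hK0
  have vP := hvol _ hP hPint
  have hM : (Matrix.of fun a b : Fin n ⊕ Fin n =>
        fderiv ℝ (fderiv ℝ (FK K)) (0, 0) (basisVec a) (basisVec b)) =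
      (((n : ℝ) + 1) * vp K) • Matrix.fromBlocks (((n : ℝ) + 2) • covM (polarBody K)) (-1) (-1)
        (((n : ℝ) + 2) • covM K) := by
    ext a b
    rw [Matrix.of_apply, hF, hH]
    rcases a with i | i <;> rcases b with j | j
    · simp [basisVec, covM, vp, EuclideanSpace.inner_single_right]
      field_simp
    · by_cases hij : i = j
      · subst hij
        simp [basisVec, vp, EuclideanSpace.inner_single_right]
        ring
      · have hji : j ≠ i := fun h => hij h.symm
        simp [basisVec, vp, EuclideanSpace.inner_single_right, hij, hji]
    · by_cases hij : i = j
      · subst hij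
        simp [basisVec, vp, EuclideanSpace.inner_single_right]
        ring
      · have hji : j ≠ i := fun h => hij h.symm
        simp [basisVec, vp, EuclideanSpace.inner_single_right, hij, hji]
    · simp [basisVec, covM, vp, EuclideanSpace.inner_single_right]
      field_simp
  rw [hM, Matrix.det_smul, det_block]
  congr 2
  · simp; ring
  · rw [Matrix.smul_mul, Matrix.mul_smul, smul_smul, sq]
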